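/- arXiv:1408.2439 — 2 statements merged into one kernel-verified Lean document; each statement's English description precedes it below -/
import Mathlib

section
/- Let Δ be a root basis of level 2 in a non-degenerate quadratic space (V,B), and let ω_I ∈ Δ* be a space-like weight. Then for every α ∈ Δ∖Δ_I one has B(α,ω_I)² ≥ B(ω_I,ω_I); consequently B(ω_I,ω_I) ≤ min{B(α,ω_I)² : α ∈ Δ∖Δ_I} = 1. -/
open scoped BigOperators

namespace BoydMaxwell

variable {V : Type*} [AddCommGroup V] [Module ℝ V]

/-- `(V, B)` is a Lorentz space: `B` is non-degenerate with exactly one negative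
eigenvalue, i.e. there is a time-like vector but every subspace on which `B` is
negative definite has dimension at most `1`. -/
def IsLorentz (B : LinearMap.BilinForm ℝ V) : Prop :=
  B.Nondegenerate ∧ (∃ v : V, B v v < 0) ∧
    ∀ W : Submodule ℝ V, (∀ v ∈ W, v ≠ 0 → B v v < 0) → Module.finrank ℝ W ≤ 1

/-- A root basis in the quadratic space `(V, B)`. -/
structure IsRootBasis (B : LinearMap.BilinForm ℝ V) (Δ : Finset V) : Prop where
  unit : ∀ α ∈ Δ, B α α = 1
  offdiag : ∀ α ∈ Δ, ∀ β ∈ Δ, α ≠ β →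
    B α β ≤ -1 ∨ ∃ k : ℕ, 2 ≤ k ∧ B α β = -Real.cos (Real.pi / k)
  posIndep : ∀ c : V → ℝ, (∀ α ∈ Δ, 0 ≤ c α) →
    (∑ α ∈ Δ, c α • α) = 0 → ∀ α ∈ Δ, c α = 0
  spans : Submodule.span ℝ (Δ : Set V) = ⊤

/-- The reflection `s_α : x ↦ x - 2 B(α,x) α`. -/
def reflection (B : LinearMap.BilinForm ℝ V) (α : V) : V →ₗ[ℝ] V :=
  LinearMap.id - (B α).smulRight ((2 : ℝ) • α)

/-- The Weyl group `W`: the subgroup of linear automorphisms generated by the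
reflections in the simple roots. -/
def weylGroup (B : LinearMap.BilinForm ℝ V) (Δ : Finset V) : Subgroup (V ≃ₗ[ℝ] V) :=
  Subgroup.closure { g : V ≃ₗ[ℝ] V | ∃ α ∈ Δ, (g : V →ₗ[ℝ] V) = reflection B α }

/-- The set of roots `Φ = W(Δ)`. -/
def roots (B : LinearMap.BilinForm ℝ V) (Δ : Finset V) : Set V :=
  { x | ∃ w ∈ weylGroup B Δ, ∃ α ∈ Δ, x = w α }

/-- The polyhedral cone of non-negative linear combinations of a finite set. -/
def cone (Δ : Finset V) : Set V :=
  { x | ∃ c : V → ℝ, (∀ α ∈ Δ, 0 ≤ c α) ∧ x = ∑ α ∈ Δ, c α • α }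

/-- `F` is a face of the convex set `C`. -/
def IsFace (C F : Set V) : Prop :=
  F ⊆ C ∧ Convex ℝ F ∧ ∀ x ∈ C, ∀ y ∈ C, ∀ t : ℝ, 0 < t → t < 1 →
    t • x + (1 - t) • y ∈ F → x ∈ F ∧ y ∈ F

/-- `I ⊆ Δ` is an `l`-facial subset: `Cone(I)` is a face of `Cone(Δ)` and
`Span(I)` has codimension `l` in `V`. -/
def IsFacial (Δ I : Finset V) (l : ℕ) : Prop :=
  I ⊆ Δ ∧ IsFace (cone Δ) (cone I) ∧
    Module.finrank ℝ (Submodule.span ℝ (I : Set V)) + l = Module.finrank ℝ V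

/-- `B` is positive semidefinite on the span of every `l`-facial subset. -/
def LevelLE (B : LinearMap.BilinForm ℝ V) (Δ : Finset V) (l : ℕ) : Prop :=
  ∀ I : Finset V, IsFacial Δ I l → ∀ x ∈ Submodule.span ℝ (I : Set V), 0 ≤ B x x

/-- The root system generated by `Δ` has level exactly `l`: `l` is the smallest
integer such that `B` is positive semidefinite on the span of every `l`-facial
subset of `Δ`. -/
def HasLevel (B : LinearMap.BilinForm ℝ V) (Δ : Finset V) (l : ℕ) : Prop :=
  LevelLE B Δ l ∧ ∀ m : ℕ, m < l → ¬ LevelLE B Δ m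

/-- `ω` is the weight associated to the `1`-facial subset `I`. -/
def IsWeight (B : LinearMap.BilinForm ℝ V) (Δ I : Finset V) (ω : V) : Prop :=
  IsFacial Δ I 1 ∧ (∀ α ∈ I, B α ω = 0) ∧
    (∀ α ∈ Δ, α ∉ I → 0 < B α ω) ∧
    (∀ α ∈ Δ, α ∉ I → 1 ≤ B α ω) ∧ (∃ α ∈ Δ, α ∉ I ∧ B α ω = 1)

/-- The set `Δ*` of weights. -/
def weights (B : LinearMap.BilinForm ℝ V) (Δ : Finset V) : Set V :=
  { ω | ∃ I : Finset V, IsWeight B Δ I ω }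

/-- The orbit `Ω = W(Δ*)`. -/
def Omega (B : LinearMap.BilinForm ℝ V) (Δ : Finset V) : Set V :=
  { x | ∃ w ∈ weylGroup B Δ, ∃ ω ∈ weights B Δ, x = w ω }

/-- Two vectors are disjoint: `B(x,y) ≤ 0` and `B` is not positive definite on
`Span{x,y}`. -/
def DisjointVec (B : LinearMap.BilinForm ℝ V) (x y : V) : Prop :=
  B x y ≤ 0 ∧ ¬ ∀ z ∈ Submodule.span ℝ ({x, y} : Set V), z ≠ 0 → 0 < B z z

/-- The fundamental chamber `C* = {x | B(x, α) ≥ 0 for all α ∈ Δ}`. -/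
def chamber (B : LinearMap.BilinForm ℝ V) (Δ : Finset V) : Set V :=
  { x | ∀ α ∈ Δ, 0 ≤ B x α }

/-- The Tits cone `T = ⋃_{w ∈ W} w(C*)`. -/
def titsCone (B : LinearMap.BilinForm ℝ V) (Δ : Finset V) : Set V :=
  { x | ∃ w ∈ weylGroup B Δ, ∃ y ∈ chamber B Δ, x = w y }

/-- The convex cone generated by an arbitrary set. -/
def coneOf (X : Set V) : Set V :=
  { x | ∃ (s : Finset V) (c : V → ℝ), (↑s ⊆ X) ∧ (∀ v ∈ s, 0 ≤ c v) ∧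
      x = ∑ v ∈ s, c v • v }

/-!
The negated component `x` of `α` orthogonal to `ω` lies in `ω^⊥ = Span(Δ_I)` and pairs
non-negatively with `Δ_I`; the inequality says that it is not space-like. Some `u ∈ Cone(Δ_I)` is
time-like: project a time-like vector to `ω^⊥`, then take absolute values of its coefficients, which
does not increase the form because distinct simple roots pair non-positively. If `-x` were not in
`Cone(Δ_I)`, the ray `u - t x` would leave the cone at a point `z` of some facet, where level `2`
gives `B(z,z) ≥ 0`; but `B(u,u) = B(z,z) + t (B(x,u) + B(x,z))` with all terms on the right
non-negative. So `-x ∈ Cone(Δ_I)`, whence `B(x,-x) ≥ 0`.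
-/

open PointedCone

section ScalarInequalities

variable {𝕜 ι : Type*} [Field 𝕜] [LinearOrder 𝕜] [IsStrictOrderedRing 𝕜]

theorem exists_forall_mul_le_of_exists_pos {s : Finset ι} {a b : ι → 𝕜}
    (hb : ∀ i ∈ s, 0 ≤ b i) (ha : ∃ i ∈ s, 0 < a i) :
    ∃ t, 0 ≤ t ∧ (∀ i ∈ s, t * a i ≤ b i) ∧ ∃ i ∈ s, 0 < a i ∧ t * a i = b i := by
  obtain ⟨i₀, hi₀, hai₀⟩ := ha
  obtain ⟨j, hj, hmin⟩ := Finset.exists_min_image {i ∈ s | 0 < a i} (fun i => b i / a i)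
    ⟨i₀, by simp [hi₀, hai₀]⟩
  simp only [Finset.mem_filter, and_imp] at hj hmin
  have ht : 0 ≤ b j / a j := div_nonneg (hb j hj.1) hj.2.le
  refine ⟨b j / a j, ht, fun i hi => ?_, j, hj.1, hj.2, div_mul_cancel₀ _ hj.2.ne'⟩
  rcases le_or_gt (a i) 0 with hai | hai
  · exact (mul_nonpos_of_nonneg_of_nonpos ht hai).trans (hb i hi)
  · exact (le_div_iff₀ hai).1 (hmin i hi hai)

theorem exists_nonneg_forall_mul_le {s : Finset ι} {a b : ι → 𝕜}
    (hnonneg : ∀ i ∈ s, 0 ≤ a i → 0 ≤ b i)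
    (hpair : ∀ i ∈ s, ∀ j ∈ s, 0 < a i → a j < 0 → a j * b i ≤ a i * b j) :
    ∃ t, 0 ≤ t ∧ ∀ i ∈ s, t * a i ≤ b i := by
  by_cases hb : ∀ i ∈ s, 0 ≤ b i
  · exact ⟨0, le_rfl, by simpa using hb⟩
  push Not at hb
  obtain ⟨i₀, hi₀, hbi₀⟩ := hb
  have ha_neg : ∀ i ∈ s, b i < 0 → a i < 0 := fun i hi hbi =>
    lt_of_not_ge fun hai => (hnonneg i hi hai).not_gt hbi
  -- The largest of the lower bounds for `t`.
  obtain ⟨j, hj, hmax⟩ := Finset.exists_max_image {i ∈ s | b i < 0} (fun i => b i / a i)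
    ⟨i₀, by simp [hi₀, hbi₀]⟩
  simp only [Finset.mem_filter, and_imp] at hj hmax
  have haj : a j < 0 := ha_neg j hj.1 hj.2
  have ht : 0 ≤ b j / a j := div_nonneg_of_nonpos hj.2.le haj.le
  refine ⟨b j / a j, ht, fun i hi => ?_⟩
  rcases lt_or_ge 0 (a i) with hai | hai
  · rw [div_mul_eq_mul_div, div_le_iff_of_neg haj]
    linarith [hpair i hi j hj.1 hai haj]
  · rcases lt_or_ge (b i) 0 with hbi | hbi
    · exact (div_le_iff_of_neg (ha_neg i hi hbi)).1 (hmax i hi hbi)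
    · exact (mul_nonpos_of_nonneg_of_nonpos ht hai).trans hbi

end ScalarInequalities

section SpanFilter

variable {𝕜 E : Type*} [Field 𝕜] [DecidableEq 𝕜] [AddCommGroup E] [Module 𝕜 E]

theorem finrank_filter_lt_of_ne_zero {I : Finset E} {f : Module.Dual 𝕜 E} {b : E}
    (hb : b ∈ Submodule.span 𝕜 (I : Set E)) (hfb : f b ≠ 0) :
    (({β ∈ I | f β = 0} : Finset E) : Set E).finrank 𝕜 < (I : Set E).finrank 𝕜 := by
  have hker : Submodule.span 𝕜 (({β ∈ I | f β = 0} : Finset E) : Set E) ≤ LinearMap.ker f :=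
    Submodule.span_le.2 fun β hβ => (Finset.mem_filter.1 hβ).2
  exact Submodule.finrank_lt_finrank_of_lt <|
    (Submodule.span_mono (Finset.coe_subset.2 (Finset.filter_subset _ _))).lt_of_not_ge
      fun hle => hfb (hker (hle hb))

end SpanFilter

section PolyhedralCones

variable {𝕜 M E : Type*} [Field 𝕜] [LinearOrder 𝕜] [IsStrictOrderedRing 𝕜]
  [AddCommGroup M] [Module 𝕜 M] [AddCommGroup E] [Module 𝕜 E]

open Classical in
/-- The Fourier–Motzkin elimination of the direction `a` from the inequalities `0 ≤ p m y`,
`m ∈ s`: the system in `y` that expresses solvability in `t ≥ 0` of `0 ≤ p m (y - t • a)`. -/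
noncomputable def fourierMotzkin (p : M →ₗ[𝕜] E →ₗ[𝕜] 𝕜) (s : Finset M) (a : E) : Finset M :=
  {m ∈ s | 0 ≤ p m a} ∪ ({m ∈ s | 0 < p m a} ×ˢ {n ∈ s | p n a < 0}).image
    fun mn => p mn.1 a • mn.2 - p mn.2 a • mn.1

theorem mem_dual_fourierMotzkin {p : M →ₗ[𝕜] E →ₗ[𝕜] 𝕜} {s : Finset M} {a y : E} :
    y ∈ dual p (fourierMotzkin p s a : Set M) ↔
      (∀ m ∈ s, 0 ≤ p m a → 0 ≤ p m y) ∧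
        ∀ m ∈ s, ∀ n ∈ s, 0 < p m a → p n a < 0 → p n a * p m y ≤ p m a * p n y := by
  classical
  simp only [mem_dual, fourierMotzkin, Finset.coe_union, Finset.coe_filter, Finset.coe_image,
    Finset.coe_product]
  constructor
  · intro hy
    refine ⟨fun m hm ham => hy (.inl ⟨hm, ham⟩), fun m hm n hn ham han => ?_⟩
    have := hy (.inr ⟨(m, n), ⟨⟨hm, ham⟩, ⟨hn, han⟩⟩, rfl⟩)
    simpa using this
  · rintro ⟨hnonneg, hpair⟩ _ (⟨hm, ham⟩ | ⟨⟨m, n⟩, ⟨⟨hm, ham⟩, ⟨hn, han⟩⟩, rfl⟩)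
    · exact hnonneg _ hm ham
    · simpa using hpair m hm n hn ham han

theorem mem_hull_singleton_sup {C : PointedCone 𝕜 E} {a y : E} :
    y ∈ hull 𝕜 {a} ⊔ C ↔ ∃ t : 𝕜, 0 ≤ t ∧ y - t • a ∈ C := by
  rw [Submodule.mem_sup]
  constructor
  · rintro ⟨_, ha, z, hz, rfl⟩
    obtain ⟨⟨t, ht⟩, rfl⟩ := Submodule.mem_span_singleton.1 ha
    exact ⟨t, ht, by simpa using hz⟩
  · rintro ⟨t, ht, hz⟩
    exact ⟨t • a, (hull 𝕜 {a}).smul_mem ht (Submodule.mem_span_singleton_self a), _, hz,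
      add_sub_cancel _ _⟩

theorem dual_fourierMotzkin (p : M →ₗ[𝕜] E →ₗ[𝕜] 𝕜) (s : Finset M) (a : E) :
    dual p (fourierMotzkin p s a : Set M) = hull 𝕜 {a} ⊔ dual p (s : Set M) := by
  ext y
  rw [mem_dual_fourierMotzkin, mem_hull_singleton_sup]
  simp only [mem_dual, map_sub, map_smul, smul_eq_mul, sub_nonneg, Finset.mem_coe]
  constructor
  · rintro ⟨hnonneg, hpair⟩
    exact exists_nonneg_forall_mul_le hnonneg hpair
  · rintro ⟨t, ht, hy⟩
    refine ⟨fun m hm ham => (mul_nonneg ht ham).trans (hy hm), fun m hm n hn ham han => ?_⟩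
    calc p n a * p m y ≤ p n a * (t * p m a) := mul_le_mul_of_nonpos_left (hy hm) han.le
      _ = p m a * (t * p n a) := by ring
      _ ≤ p m a * p n y := mul_le_mul_of_nonneg_left (hy hn) ham.le

theorem dualFG_bot [FiniteDimensional 𝕜 E] :
    (⊥ : PointedCone 𝕜 E).DualFG (LinearMap.id : Module.Dual 𝕜 E →ₗ[𝕜] _) := by
  classical
  let b := Module.finBasis 𝕜 E
  refine ⟨Finset.univ.image b.coord ∪ Finset.univ.image (-b.coord ·), ?_⟩
  refine (Submodule.eq_bot_iff _).2 fun y hy => b.ext_elem fun i => ?_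
  have hpos : 0 ≤ b.coord i y :=
    hy (Finset.mem_union_left _ (Finset.mem_image_of_mem _ (Finset.mem_univ i)))
  have hneg : 0 ≤ (-b.coord i) y :=
    hy (Finset.mem_union_right _ (Finset.mem_image_of_mem _ (Finset.mem_univ i)))
  simpa using le_antisymm (neg_nonneg.1 hneg) hpos

theorem dualFG_hull_finset [FiniteDimensional 𝕜 E] (I : Finset E) :
    (hull 𝕜 (I : Set E)).DualFG (LinearMap.id : Module.Dual 𝕜 E →ₗ[𝕜] _) := by
  classical
  induction I using Finset.induction_on with
  | empty => simpa using dualFG_bot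
  | insert a I _ ih =>
    obtain ⟨s, hs⟩ := ih
    refine ⟨fourierMotzkin (LinearMap.id : Module.Dual 𝕜 E →ₗ[𝕜] _) s a, ?_⟩
    rw [dual_fourierMotzkin, hs, Finset.coe_insert]
    exact (Submodule.span_insert (R := {c : 𝕜 // 0 ≤ c}) a _).symm

theorem exists_boundary_sub_smul {p : M →ₗ[𝕜] E →ₗ[𝕜] 𝕜} {C : PointedCone 𝕜 E}
    (hC : C.DualFG p) {u x : E} (hu : u ∈ C) (hx : -x ∉ C) :
    ∃ t : 𝕜, 0 ≤ t ∧ u - t • x ∈ C ∧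
      ∃ m, (∀ y ∈ C, 0 ≤ p m y) ∧ 0 < p m x ∧ p m (u - t • x) = 0 := by
  obtain ⟨s, rfl⟩ := hC
  have hpos : ∃ m ∈ s, 0 < p m x := by simpa using hx
  obtain ⟨t, ht, hle, m, hm, hmx, heq⟩ := exists_forall_mul_le_of_exists_pos
    (a := fun m => p m x) (b := fun m => p m u) (fun m hm => hu hm) hpos
  refine ⟨t, ht, fun n hn => ?_, m, fun y hy => hy hm, hmx, ?_⟩
  · simpa using hle n hn
  · simp [heq]

theorem nonneg_of_mem_hull {s : Set E} {f : Module.Dual 𝕜 E} (hf : ∀ β ∈ s, 0 ≤ f β) {y : E}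
    (hy : y ∈ hull 𝕜 s) : 0 ≤ f y := by
  have : f ∈ dual (LinearMap.id : Module.Dual 𝕜 E →ₗ[𝕜] _).flip (hull 𝕜 s : Set E) := by
    rw [dual_hull]
    exact fun β hβ => hf β hβ
  exact this hy

theorem isFaceOf_inf_ker {C : PointedCone 𝕜 E} {f : Module.Dual 𝕜 E} (hf : ∀ y ∈ C, 0 ≤ f y) :
    (C ⊓ ofSubmodule (LinearMap.ker f)).IsFaceOf C := by
  refine .of_mem_of_add_mem_left inf_le_left fun {x y} hx hy ⟨_, hxy⟩ => ⟨hx, ?_⟩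
  have hsum : f x + f y = 0 := by simpa using hxy
  exact ((add_eq_zero_iff_of_nonneg (hf x hx) (hf y hy)).1 hsum).1

theorem hull_inf_ker (I : Finset E) {f : Module.Dual 𝕜 E} (hf : ∀ β ∈ I, 0 ≤ f β) :
    hull 𝕜 (I : Set E) ⊓ ofSubmodule (LinearMap.ker f) =
      hull 𝕜 (({β ∈ I | f β = 0} : Finset E) : Set E) := by
  apply le_antisymm
  · rintro y ⟨hy, hfy⟩
    induction hy using Submodule.span_induction with
    | mem β hβ => exact subset_hull (Finset.mem_filter.2 ⟨hβ, hfy⟩)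
    | zero => exact zero_mem _
    | add x y hx hy ihx ihy =>
      have hsum : f x + f y = 0 := by simpa using hfy
      obtain ⟨hfx, hfy⟩ :=
        (add_eq_zero_iff_of_nonneg (nonneg_of_mem_hull hf hx) (nonneg_of_mem_hull hf hy)).1 hsum
      exact add_mem (ihx hfx) (ihy hfy)
    | smul c x _ ih =>
      have hmul : c = 0 ∨ f x = 0 := by simpa using hfy
      obtain rfl | hfx := hmul
      · simp
      · exact Submodule.smul_mem _ c (ih hfx)
  · refine Submodule.span_le.2 fun β hβ => ?_
    obtain ⟨hβI, hβ⟩ := Finset.mem_filter.1 hβ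
    exact ⟨subset_hull hβI, hβ⟩

theorem isFaceOf_hull_filter (I : Finset E) {f : Module.Dual 𝕜 E} (hf : ∀ β ∈ I, 0 ≤ f β) :
    (hull 𝕜 (({β ∈ I | f β = 0} : Finset E) : Set E)).IsFaceOf (hull 𝕜 (I : Set E)) :=
  hull_inf_ker I hf ▸ isFaceOf_inf_ker fun _ => nonneg_of_mem_hull hf

theorem exists_dual_neg_of_finrank_lt {I J : Finset E} (b : E)
    (h : (J : Set E).finrank 𝕜 + 1 < (I : Set E).finrank 𝕜) :
    ∃ g : Module.Dual 𝕜 E, (∀ β ∈ J, g β = 0) ∧ g b = 0 ∧ ∃ γ ∈ I, g γ < 0 := by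
  let K := Submodule.span 𝕜 (J : Set E) ⊔ Submodule.span 𝕜 {b}
  have hK : Module.finrank 𝕜 K ≤ (J : Set E).finrank 𝕜 + 1 :=
    (Submodule.finrank_add_le_finrank_add_finrank _ _).trans
      (Nat.add_le_add_left (by simpa using finrank_span_le_card (R := 𝕜) ({b} : Set E)) _)
  obtain ⟨γ, hγI, hγK⟩ : ∃ γ ∈ I, γ ∉ K := by
    by_contra! hIK
    exact absurd (Submodule.finrank_mono (Submodule.span_le.2 hIK)) (hK.trans_lt h).not_ge
  obtain ⟨g, hgγ, hgK⟩ := Submodule.exists_le_ker_of_notMem hγK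
  have hgJ : ∀ β ∈ J, g β = 0 := fun β hβ =>
    hgK (Submodule.mem_sup_left (Submodule.subset_span hβ))
  have hgb : g b = 0 := hgK (Submodule.mem_sup_right (Submodule.mem_span_singleton_self b))
  rcases hgγ.lt_or_gt with hneg | hpos
  · exact ⟨g, hgJ, hgb, γ, hγI, hneg⟩
  · exact ⟨-g, by simpa using hgJ, by simpa using hgb, γ, hγI, by simpa using hpos⟩

-- Rotate the supporting hyperplane of `f` about its contact points and `b` until it meets another
-- generator.
theorem exists_filter_ssubset_filter {I : Finset E} {f : Module.Dual 𝕜 E}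
    (hf : ∀ β ∈ I, 0 ≤ f β) (b : E)
    (h : (({β ∈ I | f β = 0} : Finset E) : Set E).finrank 𝕜 + 1 < (I : Set E).finrank 𝕜) :
    ∃ g : Module.Dual 𝕜 E, (∀ β ∈ I, 0 ≤ g β) ∧ g b = f b ∧
      ({β ∈ I | f β = 0} : Finset E) ⊂ {β ∈ I | g β = 0} := by
  obtain ⟨g, hgf, hgb, γ, hγ, hgγ⟩ := exists_dual_neg_of_finrank_lt b h
  obtain ⟨t, -, hle, δ, hδ, hgδ, heq⟩ := exists_forall_mul_le_of_exists_pos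
    (a := fun β => -g β) hf ⟨γ, hγ, neg_pos.2 hgγ⟩
  have hδ_zero : (f + t • g) δ = 0 := by simp [← heq]
  refine ⟨f + t • g, fun β hβ => ?_, by simp [hgb], ?_⟩
  · simpa [neg_le_iff_add_nonneg] using hle β hβ
  · refine (Finset.ssubset_iff_of_subset fun β hβ => ?_).2
      ⟨δ, Finset.mem_filter.2 ⟨hδ, hδ_zero⟩, fun hδf => hgδ.ne' (by simp [hgf δ hδf])⟩
    have hβ' := Finset.mem_filter.1 hβ
    exact Finset.mem_filter.2 ⟨hβ'.1, by simp [hβ'.2, hgf β hβ]⟩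

theorem exists_facet_filter_subset {I : Finset E} {f : Module.Dual 𝕜 E} (hf : ∀ β ∈ I, 0 ≤ f β)
    {b : E} (hb : b ∈ Submodule.span 𝕜 (I : Set E)) (hfb : f b ≠ 0) :
    ∃ g : Module.Dual 𝕜 E, (∀ β ∈ I, 0 ≤ g β) ∧
      ({β ∈ I | f β = 0} : Finset E) ⊆ {β ∈ I | g β = 0} ∧
      (({β ∈ I | g β = 0} : Finset E) : Set E).finrank 𝕜 + 1 = (I : Set E).finrank 𝕜 := by
  induction hn : I.card - Finset.card {β ∈ I | f β = 0} using Nat.strong_induction_on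
    generalizing f with
  | _ n ih =>
    rcases (Nat.succ_le_of_lt (finrank_filter_lt_of_ne_zero hb hfb)).eq_or_lt with hrank | hrank
    · exact ⟨f, hf, subset_rfl, hrank⟩
    · obtain ⟨g, hg, hgb, hfg⟩ := exists_filter_ssubset_filter hf b hrank
      have hcard := Finset.card_lt_card hfg
      have hcardI := Finset.card_filter_le I (g · = 0)
      obtain ⟨k, hk, hgk, hkrank⟩ := ih _ (by omega) hg (hgb ▸ hfb) rfl
      exact ⟨k, hk, hfg.1.trans hgk, hkrank⟩

end PolyhedralCones

section FacialSubsets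

theorem cone_eq_hull (Δ : Finset V) : cone Δ = hull ℝ (Δ : Set V) := by
  ext x
  constructor
  · rintro ⟨c, hc, rfl⟩
    exact sum_mem fun α hα => (hull ℝ (Δ : Set V)).smul_mem (hc α hα) (subset_hull hα)
  · intro hx
    obtain ⟨c, -, rfl⟩ := Submodule.mem_span_finset.1 hx
    exact ⟨fun α => c α, fun α _ => (c α).2, rfl⟩

theorem isFace_coe_iff {C F : PointedCone ℝ V} : IsFace (C : Set V) F ↔ F.IsFaceOf C := by
  constructor
  · rintro ⟨hle, -, hface⟩
    refine .of_mem_of_add_mem_left hle fun {x y} hx hy hxy => ?_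
    refine (hface x hx y hy (1 / 2) (by norm_num) (by norm_num) ?_).1
    convert! F.smul_mem (by norm_num : (0 : ℝ) ≤ 1 / 2) hxy using 1
    module
  · intro h
    refine ⟨h.le, F.convex, fun x hx y hy t ht₀ ht₁ hxy => ?_⟩
    have ht : 0 < 1 - t := sub_pos.2 ht₁
    exact ⟨h.mem_of_smul_add_smul_mem_left hx hy ht₀ ht hxy,
      h.mem_of_smul_add_smul_mem_right hx hy ht₀ ht hxy⟩

theorem IsFacial.filter {Δ I : Finset V} {l : ℕ} (hI : IsFacial Δ I l) {f : Module.Dual ℝ V}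
    (hf : ∀ β ∈ I, 0 ≤ f β)
    (hrank : (({β ∈ I | f β = 0} : Finset V) : Set V).finrank ℝ + 1 = (I : Set V).finrank ℝ) :
    IsFacial Δ {β ∈ I | f β = 0} (l + 1) := by
  obtain ⟨hsub, hface, hIrank⟩ := hI
  refine ⟨(Finset.filter_subset _ _).trans hsub, ?_, ?_⟩
  · rw [cone_eq_hull, cone_eq_hull, isFace_coe_iff] at hface ⊢
    exact (isFaceOf_hull_filter I hf).trans hface
  · rw [← hIrank, add_comm l 1, ← add_assoc]
    exact congrArg (· + l) hrank

variable {B : LinearMap.BilinForm ℝ V} {Δ I : Finset V} {l : ℕ}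

theorem LevelLE.apply_self_nonneg_of_boundary (hlevel : LevelLE B Δ (l + 1))
    (hI : IsFacial Δ I l) {f : Module.Dual ℝ V} (hf : ∀ β ∈ I, 0 ≤ f β) {b : V}
    (hb : b ∈ Submodule.span ℝ (I : Set V)) (hfb : f b ≠ 0) {y : V} (hy : y ∈ hull ℝ (I : Set V))
    (hfy : f y = 0) : 0 ≤ B y y := by
  obtain ⟨g, hg, hfg, hrank⟩ := exists_facet_filter_subset hf hb hfb
  have hyf : y ∈ hull ℝ (({β ∈ I | f β = 0} : Finset V) : Set V) := hull_inf_ker I hf ▸ ⟨hy, hfy⟩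
  exact hlevel _ (hI.filter hg hrank) y
    (Submodule.span_mono (Finset.coe_subset.2 hfg) (hull_le_span ℝ _ hyf))

end FacialSubsets

section BilinearForms

variable {B : LinearMap.BilinForm ℝ V}

theorem exists_mem_hull_apply_self_neg_of_mem_span {I : Finset V}
    (hI : ∀ α ∈ I, ∀ β ∈ I, α ≠ β → B α β ≤ 0) {y : V} (hy : y ∈ Submodule.span ℝ (I : Set V))
    (hyy : B y y < 0) : ∃ u ∈ hull ℝ (I : Set V), B u u < 0 := by
  obtain ⟨c, -, rfl⟩ := Submodule.mem_span_finset.1 hy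
  refine ⟨∑ α ∈ I, |c α| • α, sum_mem fun α hα =>
    (hull ℝ (I : Set V)).smul_mem (abs_nonneg (c α)) (subset_hull hα), lt_of_le_of_lt ?_ hyy⟩
  simp only [map_sum, LinearMap.sum_apply, map_smul, LinearMap.smul_apply, smul_eq_mul,
    Finset.mul_sum, ← mul_assoc]
  refine Finset.sum_le_sum fun α hα => Finset.sum_le_sum fun β hβ => ?_
  rcases eq_or_ne β α with rfl | hne
  · rw [abs_mul_abs_self]
  · rw [← abs_mul]
    exact mul_le_mul_of_nonpos_right (le_abs_self _) (hI β hβ α hα hne)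

/-- The vector rejection of `y` from `ω`: the component of `y` that is `B`-orthogonal to `ω`. It is
meaningful only when `B ω ω ≠ 0`; otherwise the division makes it equal to `y`. -/
noncomputable def rejection (B : LinearMap.BilinForm ℝ V) (ω y : V) : V :=
  y - (B y ω / B ω ω) • ω

theorem rejection_apply_self {ω : V} (hω : B ω ω ≠ 0) (y : V) : B (rejection B ω y) ω = 0 := by
  simp [rejection, hω]

theorem rejection_apply_of_apply_eq_zero {ω β : V} (hβ : B ω β = 0) (y : V) :
    B (rejection B ω y) β = B y β := by
  simp [rejection, hβ]

theorem rejection_apply_rejection (hB : B.IsSymm) {ω : V} (hω : B ω ω ≠ 0) (y : V) :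
    B (rejection B ω y) (rejection B ω y) = B y y - B y ω ^ 2 / B ω ω := by
  have hright : B (rejection B ω y) (rejection B ω y) = B (rejection B ω y) y := by
    conv_lhs => rw [rejection.eq_def B ω y, map_sub, map_smul, ← rejection.eq_def]
    simp [rejection_apply_self hω]
  rw [hright]
  simp only [rejection, map_sub, map_smul, LinearMap.sub_apply, LinearMap.smul_apply, smul_eq_mul,
    hB.eq ω y]
  ring

end BilinearForms

section Weights

variable {B : LinearMap.BilinForm ℝ V} {Δ I : Finset V} {l : ℕ}

theorem IsRootBasis.apply_nonpos (hΔ : IsRootBasis B Δ) {α β : V} (hα : α ∈ Δ) (hβ : β ∈ Δ)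
    (hne : α ≠ β) : B α β ≤ 0 := by
  obtain hle | ⟨k, hk, heq⟩ := hΔ.offdiag α hα β hβ hne
  · exact hle.trans (by norm_num)
  · have hk' : (2 : ℝ) ≤ k := mod_cast hk
    rw [heq, neg_nonpos]
    refine Real.cos_nonneg_of_neg_pi_div_two_le_of_le ?_ ?_
    · exact (neg_nonpos.2 Real.pi_div_two_pos.le).trans (by positivity)
    · gcongr

theorem HasLevel.exists_apply_self_neg (h : HasLevel B Δ l) (hl : 0 < l) : ∃ v, B v v < 0 := by
  have hnot := h.2 0 hl
  simp only [LevelLE, not_forall, not_le] at hnot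
  obtain ⟨-, -, v, -, hv⟩ := hnot
  exact ⟨v, hv⟩

variable [FiniteDimensional ℝ V]

theorem IsFacial.mem_span_of_apply_eq_zero (hI : IsFacial Δ I 1) {ω : V}
    (hIω : ∀ β ∈ I, B β ω = 0) (hω : B ω ω ≠ 0) {y : V} (hy : B y ω = 0) :
    y ∈ Submodule.span ℝ (I : Set V) := by
  have hle : Submodule.span ℝ (I : Set V) ≤ LinearMap.ker (B.flip ω) := Submodule.span_le.2 hIω
  have hlt : Module.finrank ℝ (LinearMap.ker (B.flip ω)) < Module.finrank ℝ V :=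
    Submodule.finrank_lt fun htop => hω (htop ▸ Submodule.mem_top : ω ∈ LinearMap.ker (B.flip ω))
  have heq := Submodule.eq_of_le_of_finrank_le hle (by have := hI.2.2; omega)
  rw [heq]
  exact hy

theorem LevelLE.neg_mem_hull_of_apply_nonneg (hlevel : LevelLE B Δ (l + 1)) (hB : B.IsSymm)
    (hI : IsFacial Δ I l) {u x : V} (hu : u ∈ hull ℝ (I : Set V)) (huu : B u u < 0)
    (hx : x ∈ Submodule.span ℝ (I : Set V)) (hxI : ∀ β ∈ I, 0 ≤ B x β) :
    -x ∈ hull ℝ (I : Set V) := by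
  by_contra hneg
  obtain ⟨t, ht, hz, f, hf, hfx, hfz⟩ := exists_boundary_sub_smul (dualFG_hull_finset I) hu hneg
  set z := u - t • x with hz_def
  have hzz : 0 ≤ B z z := hlevel.apply_self_nonneg_of_boundary hI
    (fun β hβ => hf β (subset_hull hβ)) hx hfx.ne' hz hfz
  have hxu : 0 ≤ B x u := nonneg_of_mem_hull hxI hu
  have hxz : 0 ≤ B x z := nonneg_of_mem_hull hxI hz
  have huu_eq : B u u = B z z + t * (B x u + B x z) := by
    simp only [hz_def, map_sub, map_smul, LinearMap.sub_apply, LinearMap.smul_apply, smul_eq_mul,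
      hB.eq u x]
    ring
  exact huu.not_ge (huu_eq ▸ by positivity)

theorem LevelLE.apply_self_nonpos_of_apply_nonpos (hlevel : LevelLE B Δ (l + 1)) (hB : B.IsSymm)
    (hI : IsFacial Δ I l) {u x : V} (hu : u ∈ hull ℝ (I : Set V)) (huu : B u u < 0)
    (hx : x ∈ Submodule.span ℝ (I : Set V)) (hxI : ∀ β ∈ I, B x β ≤ 0) : B x x ≤ 0 := by
  have hxI' : ∀ β ∈ I, 0 ≤ B (-x) β := by simpa using hxI
  have hmem := hlevel.neg_mem_hull_of_apply_nonneg hB hI hu huu (neg_mem hx) hxI'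
  simpa using nonneg_of_mem_hull hxI' hmem

theorem IsFacial.exists_mem_hull_apply_self_neg (hI : IsFacial Δ I 1) (hB : B.IsSymm)
    (hobtuse : ∀ α ∈ I, ∀ β ∈ I, α ≠ β → B α β ≤ 0) {ω : V} (hIω : ∀ β ∈ I, B β ω = 0)
    (hω : 0 < B ω ω) {v : V} (hv : B v v < 0) : ∃ u ∈ hull ℝ (I : Set V), B u u < 0 := by
  refine exists_mem_hull_apply_self_neg_of_mem_span hobtuse
    (hI.mem_span_of_apply_eq_zero hIω hω.ne' (rejection_apply_self hω.ne' v)) ?_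
  rw [rejection_apply_rejection hB hω.ne']
  exact (sub_le_self _ (by positivity)).trans_lt hv

theorem LevelLE.apply_self_mul_apply_self_le_sq (hlevel : LevelLE B Δ 2) (hB : B.IsSymm)
    (hobtuse : ∀ α ∈ Δ, ∀ β ∈ Δ, α ≠ β → B α β ≤ 0) {v : V} (hv : B v v < 0)
    (hI : IsFacial Δ I 1) {ω : V} (hIω : ∀ β ∈ I, B β ω = 0) (hω : 0 < B ω ω)
    {α : V} (hα : α ∈ Δ) (hαI : α ∉ I) : B α α * B ω ω ≤ B α ω ^ 2 := by
  obtain ⟨u, hu, huu⟩ := hI.exists_mem_hull_apply_self_neg hB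
    (fun β hβ γ hγ => hobtuse β (hI.1 hβ) γ (hI.1 hγ)) hIω hω hv
  have hnonpos : ∀ β ∈ I, B (rejection B ω α) β ≤ 0 := fun β hβ => by
    rw [rejection_apply_of_apply_eq_zero (hB.eq ω β ▸ hIω β hβ)]
    exact hobtuse α hα β (hI.1 hβ) (ne_of_mem_of_not_mem hβ hαI).symm
  have hself := hlevel.apply_self_nonpos_of_apply_nonpos hB hI hu huu
    (hI.mem_span_of_apply_eq_zero hIω hω.ne' (rejection_apply_self hω.ne' α)) hnonpos
  rwa [rejection_apply_rejection hB hω.ne', sub_nonpos, le_div_iff₀ hω] at hself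

theorem spacelike_weight_le_one_general (hB : B.IsSymm) (hunit : ∀ α ∈ Δ, B α α = 1)
    (hobtuse : ∀ α ∈ Δ, ∀ β ∈ Δ, α ≠ β → B α β ≤ 0) (hlevel : LevelLE B Δ 2)
    (htime : ∃ v, B v v < 0) {ω : V} (hw : IsWeight B Δ I ω) (hω : 0 < B ω ω) :
    (∀ α ∈ Δ, α ∉ I → B ω ω ≤ B α ω ^ 2) ∧ B ω ω ≤ 1 := by
  obtain ⟨v, hv⟩ := htime
  obtain ⟨hI, hIω, -, -, α₁, hα₁, hα₁I, hα₁ω⟩ := hw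
  have hbound : ∀ α ∈ Δ, α ∉ I → B ω ω ≤ B α ω ^ 2 := fun α hα hαI => by
    simpa [hunit α hα] using
      hlevel.apply_self_mul_apply_self_le_sq hB hobtuse hv hI hIω hω hα hαI
  exact ⟨hbound, by simpa [hα₁ω] using hbound α₁ hα₁ hα₁I⟩

end Weights

/-- inequality (eqn:omega<1). For a root basis of level `2`
in a non-degenerate quadratic space and a space-like weight `ω_I`, one has
`B(α,ω_I)² ≥ B(ω_I,ω_I)` for every `α ∈ Δ∖Δ_I`, and consequently
`B(ω_I,ω_I) ≤ 1`. -/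
theorem spacelike_weight_le_one
    {V : Type*} [AddCommGroup V] [Module ℝ V] [FiniteDimensional ℝ V]
    (B : LinearMap.BilinForm ℝ V) (hsymm : ∀ x y : V, B x y = B y x)
    (hnd : B.Nondegenerate)
    (Δ : Finset V) (hΔ : IsRootBasis B Δ) (h2 : HasLevel B Δ 2)
    (I : Finset V) (ω : V) (hw : IsWeight B Δ I ω) (hsp : 0 < B ω ω) :
    (∀ α ∈ Δ, α ∉ I → B ω ω ≤ (B α ω) ^ 2) ∧ B ω ω ≤ 1 := by
  exact spacelike_weight_le_one_general ⟨hsymm⟩ hΔ.unit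
    (fun _ hα _ hβ => hΔ.apply_nonpos hα hβ) h2.1 (h2.exists_apply_self_neg two_pos) hw hsp

end BoydMaxwell
end

section
/- Let (Δ,Φ) be a Lorentzian based root system of level ≥ 2, and let ω_I ∈ Δ* be a weight with B(ω_I,ω_I) < 0. Then the facial subgroup W_I = ⟨s_α : α ∈ Δ_I⟩ is finite, and for every space-like weight ω ∈ Δ*, the vector Σ_{w∈W_I} w(ω) is a scalar multiple of ω_I. -/
open scoped BigOperators

namespace BoydMaxwell

variable {V : Type*} [AddCommGroup V] [Module ℝ V]

/-!
On the orthogonal complement of a time-like vector a Lorentz form is positive definite, so `B` is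
positive definite on `Span(I)`. The group `W_I` is the image of a Coxeter group under its geometric
representation. There, by induction on the length of `w`, a simple root `α i` is sent to a positive
root as soon as `i` is not a right descent of `w`: split off from `w` the longest alternating word
in `i` and a descent `j`, and compute its action on the plane of `α i` and `α j` with Chebyshev
polynomials of the second kind. Hence an element keeping all simple roots on the positive side of a
separating hyperplane is trivial, and, the roots being unit vectors of a Euclidean space, the group
is finite. The average over `W_I` is then fixed by each reflection, hence orthogonal to `I`, and the
orthogonal complement of `I` is the line through `ω_I`.
-/

section Reflection

lemma reflection_apply (B : LinearMap.BilinForm ℝ V) (α x : V) :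
    reflection B α x = x - (2 * B α x) • α := by
  simp [reflection, smul_smul, mul_comm]

variable {B : LinearMap.BilinForm ℝ V} {α : V}

lemma involutive_reflection (hα : B α α = 1) : Function.Involutive (reflection B α) := fun x => by
  simp only [reflection_apply, map_sub, map_smul, hα]
  module

/-- The reflection in a unit vector, as a linear automorphism. -/
def reflectionEquiv (hα : B α α = 1) : V ≃ₗ[ℝ] V :=
  LinearEquiv.ofInvolutive (reflection B α) (involutive_reflection hα)

lemma reflectionEquiv_apply (hα : B α α = 1) (x : V) :
    reflectionEquiv hα x = x - (2 * B α x) • α :=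
  reflection_apply B α x

lemma reflectionEquiv_mul_self (hα : B α α = 1) :
    reflectionEquiv hα * reflectionEquiv hα = 1 :=
  LinearEquiv.ext (involutive_reflection hα)

lemma reflectionEquiv_apply_self (hα : B α α = 1) : reflectionEquiv hα α = -α := by
  rw [reflectionEquiv_apply, hα]
  module

lemma reflectionEquiv_apply_eq_self_iff (hα : B α α = 1) {x : V} :
    reflectionEquiv hα x = x ↔ B α x = 0 := by
  have hα₀ : α ≠ 0 := by rintro rfl; simp at hα
  simp [reflectionEquiv_apply, hα₀]

lemma bilin_reflectionEquiv_reflectionEquiv (hB : B.IsSymm) (hα : B α α = 1) (x y : V) :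
    B (reflectionEquiv hα x) (reflectionEquiv hα y) = B x y := by
  simp only [reflectionEquiv_apply, map_sub, map_smul, LinearMap.sub_apply, LinearMap.smul_apply,
    smul_eq_mul, hα, hB.eq x α]
  ring

end Reflection

section Dihedral

open Polynomial Chebyshev

lemma chebyshev_U_eval_add_two (n : ℤ) (c : ℝ) :
    (U ℝ (n + 2)).eval c = 2 * c * (U ℝ (n + 1)).eval c - (U ℝ n).eval c := by
  simp [U_add_two]

lemma chebyshev_U_eval_nonneg_of_one_le {c : ℝ} (hc : 1 ≤ c) (n : ℕ) :
    0 ≤ (U ℝ ((n : ℤ) - 1)).eval c := by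
  suffices h : 0 ≤ (U ℝ ((n : ℤ) - 1)).eval c ∧
      (U ℝ ((n : ℤ) - 1)).eval c ≤ (U ℝ n).eval c from h.1
  induction n with
  | zero => simp
  | succ n ih =>
    have hrec := chebyshev_U_eval_add_two ((n : ℤ) - 1) c
    rw [show (n : ℤ) - 1 + 2 = n + 1 by ring, sub_add_cancel] at hrec
    push_cast
    rw [add_sub_cancel_right, hrec]
    constructor <;> nlinarith [ih.1, ih.2]

lemma sin_pi_div_pos {m : ℕ} (hm : 2 ≤ m) : 0 < Real.sin (Real.pi / m) := by
  have hm' : (2 : ℝ) ≤ m := by exact_mod_cast hm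
  refine Real.sin_pos_of_pos_of_lt_pi (by positivity) (div_lt_self Real.pi_pos (by linarith))

lemma chebyshev_U_eval_cos_pi_div_nonneg {m n : ℕ} (hm : 2 ≤ m) (hn : n ≤ m) :
    0 ≤ (U ℝ ((n : ℤ) - 1)).eval (Real.cos (Real.pi / m)) := by
  have hm₀ : (0 : ℝ) < m := by positivity
  refine nonneg_of_mul_nonneg_left ?_ (sin_pi_div_pos hm)
  rw [U_real_cos]
  push_cast
  rw [sub_add_cancel]
  refine Real.sin_nonneg_of_nonneg_of_le_pi (by positivity) ?_
  rw [← mul_div_assoc, div_le_iff₀ hm₀, mul_comm]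
  gcongr

lemma chebyshev_U_eval_cos_pi_div_two_mul {m : ℕ} (hm : 2 ≤ m) :
    (U ℝ (2 * m)).eval (Real.cos (Real.pi / m)) = 1 := by
  have hm₀ : (m : ℝ) ≠ 0 := by positivity
  refine mul_right_cancel₀ (sin_pi_div_pos hm).ne' ?_
  rw [U_real_cos, one_mul, ← Real.sin_add_two_pi (Real.pi / m)]
  congr 1
  push_cast
  field_simp
  ring

lemma chebyshev_U_eval_cos_pi_div_two_mul_sub_one {m : ℕ} (hm : 2 ≤ m) :
    (U ℝ (2 * m - 1)).eval (Real.cos (Real.pi / m)) = 0 := by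
  have hm₀ : (m : ℝ) ≠ 0 := by positivity
  refine mul_right_cancel₀ (sin_pi_div_pos hm).ne' ?_
  rw [U_real_cos, zero_mul, ← Real.sin_two_pi]
  congr 1
  push_cast
  field_simp
  ring

variable {B : LinearMap.BilinForm ℝ V} {α β : V}

lemma reflectionEquiv_pow_apply_left (hB : B.IsSymm) (hα : B α α = 1) (hβ : B β β = 1) (k : ℕ) :
    ((reflectionEquiv hα * reflectionEquiv hβ) ^ k) α =
      (U ℝ (2 * k)).eval (-B α β) • α + (U ℝ (2 * k - 1)).eval (-B α β) • β := by
  induction k with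
  | zero => simp
  | succ k ih =>
    have hodd := chebyshev_U_eval_add_two (2 * k - 1) (-B α β)
    have heven := chebyshev_U_eval_add_two (2 * k) (-B α β)
    rw [show (2 * k - 1 + 2 : ℤ) = 2 * k + 1 by ring, sub_add_cancel] at hodd
    rw [pow_succ', LinearEquiv.mul_apply, ih]
    push_cast
    rw [show (2 * (k + 1) : ℤ) = 2 * k + 2 by ring, show (2 * k + 2 - 1 : ℤ) = 2 * k + 1 by ring,
      heven, hodd]
    simp only [LinearEquiv.mul_apply, reflectionEquiv_apply, map_add, map_sub, map_smul, hα, hβ,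
      hB.eq β α]
    module

lemma reflectionEquiv_mul_pow_apply_left (hB : B.IsSymm) (hα : B α α = 1) (hβ : B β β = 1) (k : ℕ) :
    (reflectionEquiv hβ * (reflectionEquiv hα * reflectionEquiv hβ) ^ k) α =
      (U ℝ (2 * k)).eval (-B α β) • α + (U ℝ (2 * k + 1)).eval (-B α β) • β := by
  have hodd := chebyshev_U_eval_add_two (2 * k - 1) (-B α β)
  rw [show (2 * k - 1 + 2 : ℤ) = 2 * k + 1 by ring, sub_add_cancel] at hodd
  rw [LinearEquiv.mul_apply, reflectionEquiv_pow_apply_left hB hα hβ, hodd]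
  simp only [reflectionEquiv_apply, map_add, map_smul, hβ, hB.eq β α]
  module

lemma reflectionEquiv_pow_apply_left_eq_self (hB : B.IsSymm) (hα : B α α = 1) (hβ : B β β = 1)
    {m : ℕ} (hm : 2 ≤ m) (hαβ : B α β = -Real.cos (Real.pi / m)) :
    ((reflectionEquiv hα * reflectionEquiv hβ) ^ m) α = α := by
  rw [reflectionEquiv_pow_apply_left hB, hαβ, neg_neg, chebyshev_U_eval_cos_pi_div_two_mul hm,
    chebyshev_U_eval_cos_pi_div_two_mul_sub_one hm]
  module

lemma reflectionEquiv_pow_apply_right_eq_self (hB : B.IsSymm) (hα : B α α = 1) (hβ : B β β = 1)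
    {m : ℕ} (hm : 2 ≤ m) (hαβ : B α β = -Real.cos (Real.pi / m)) :
    ((reflectionEquiv hα * reflectionEquiv hβ) ^ m) β = β := by
  have hinv : (reflectionEquiv hα * reflectionEquiv hβ) ^ m =
      ((reflectionEquiv hβ * reflectionEquiv hα) ^ m)⁻¹ := by
    rw [← inv_pow, mul_inv_rev, inv_eq_of_mul_eq_one_left (reflectionEquiv_mul_self hα),
      inv_eq_of_mul_eq_one_left (reflectionEquiv_mul_self hβ)]
  rw [hinv]
  have hfix := reflectionEquiv_pow_apply_left_eq_self hB hβ hα hm (by rw [hB.eq, hαβ])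
  exact (LinearEquiv.symm_apply_eq _).2 hfix.symm

lemma exists_eq_orthogonal_add_smul_add_smul (hB : B.IsSymm) (hα : B α α = 1) (hβ : B β β = 1)
    (hαβ : 1 - B α β ^ 2 ≠ 0) (x : V) :
    ∃ (y : V) (a b : ℝ), B α y = 0 ∧ B β y = 0 ∧ x = y + a • α + b • β := by
  set a := (B α x - B α β * B β x) / (1 - B α β ^ 2) with ha
  set b := (B β x - B α β * B α x) / (1 - B α β ^ 2) with hb
  refine ⟨x - a • α - b • β, a, b, ?_, ?_, by module⟩ <;>
  · simp only [map_sub, map_smul, smul_eq_mul, hα, hβ, hB.eq β α, ha, hb]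
    field_simp
    ring

lemma reflectionEquiv_mul_pow_eq_one (hB : B.IsSymm) (hα : B α α = 1) (hβ : B β β = 1) {m : ℕ}
    (hm : 2 ≤ m) (hαβ : B α β = -Real.cos (Real.pi / m)) :
    (reflectionEquiv hα * reflectionEquiv hβ) ^ m = 1 := by
  have hdet : 1 - B α β ^ 2 ≠ 0 := by
    rw [hαβ, neg_sq, ← Real.sin_sq]
    exact pow_ne_zero 2 (sin_pi_div_pos hm).ne'
  ext x
  obtain ⟨y, a, b, hαy, hβy, rfl⟩ := exists_eq_orthogonal_add_smul_add_smul hB hα hβ hdet x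
  have fixes_orthogonal : ((reflectionEquiv hα * reflectionEquiv hβ) ^ m) y = y := by
    rw [LinearEquiv.pow_apply]
    refine Function.iterate_fixed ?_ m
    rw [LinearEquiv.mul_apply, (reflectionEquiv_apply_eq_self_iff hβ).2 hβy,
      (reflectionEquiv_apply_eq_self_iff hα).2 hαy]
  simp only [map_add, map_smul, fixes_orthogonal,
    reflectionEquiv_pow_apply_left_eq_self hB hα hβ hm hαβ,
    reflectionEquiv_pow_apply_right_eq_self hB hα hβ hm hαβ, LinearEquiv.coe_one, id]

end Dihedral

section Coxeter

variable {ι W : Type*} [Group W] {M : CoxeterMatrix ι}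

open CoxeterSystem

lemma two_le_coxeterMatrix_of_ne {i j : ι} (hij : i ≠ j) (hM : M i j ≠ 0) : 2 ≤ M i j := by
  have := M.off_diagonal i j hij
  lia

lemma exists_eq_mul_wordProd_alternatingWord (cs : CoxeterSystem M W) {w : W} {j : ι}
    (hj : cs.IsRightDescent w j) (i : ι) :
    ∃ (v : W) (k : ℕ), w = v * cs.wordProd (alternatingWord i j (k + 1)) ∧
      cs.length w = cs.length v + (k + 1) ∧ ¬cs.IsRightDescent v i ∧ ¬cs.IsRightDescent v j := by
  obtain ⟨v, ⟨k, hw, hlen⟩, hmin⟩ := exists_minimalFor_of_wellFoundedLT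
    (fun v => ∃ k, w = v * cs.wordProd (alternatingWord i j k) ∧ cs.length w = cs.length v + k)
    cs.length ⟨w, 0, by simp [alternatingWord], rfl⟩
  have next_letter : ¬cs.IsRightDescent v (if Even k then j else i) := by
    intro hdesc
    rw [isRightDescent_iff] at hdesc
    have := hmin (j := v * cs.simple (if Even k then j else i)) ⟨k + 1, ?_, by lia⟩ (by lia)
    · lia
    · rw [alternatingWord_succ', wordProd_cons, mul_assoc, simple_mul_simple_cancel_left, hw]
  obtain _ | k := k
  · simp_all [alternatingWord]
  have first_letter : ¬cs.IsRightDescent v (if Even k then j else i) := by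
    intro hdesc
    rw [isRightDescent_iff] at hdesc
    have hle := cs.length_mul_le (v * cs.simple (if Even k then j else i))
      (cs.wordProd (alternatingWord i j k))
    have hword := cs.length_wordProd_le (alternatingWord i j k)
    rw [length_alternatingWord] at hword
    rw [mul_assoc, ← wordProd_cons, ← alternatingWord_succ', ← hw] at hle
    lia
  refine ⟨v, k, hw, hlen, ?_⟩
  by_cases hk : Even k <;> simp_all [Nat.even_add_one]

lemma isReduced_alternatingWord_succ_of_not_isRightDescent (cs : CoxeterSystem M W) {v : W}
    {i j : ι} {k : ℕ}
    (hi : ¬cs.IsRightDescent (v * cs.wordProd (alternatingWord i j k)) i)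
    (hlen : cs.length (v * cs.wordProd (alternatingWord i j k)) = cs.length v + k) :
    cs.IsReduced (alternatingWord j i (k + 1)) := by
  rw [not_isRightDescent_iff, mul_assoc, ← wordProd_concat, ← alternatingWord_succ, hlen] at hi
  refine le_antisymm (cs.length_wordProd_le _) ?_
  rw [length_alternatingWord]
  have := cs.length_mul_le v (cs.wordProd (alternatingWord j i (k + 1)))
  lia

end Coxeter

/-- A geometric realization of the Coxeter matrix `M`: a family of simple roots, of norm one for
the symmetric form `B`, such that the reflections in `α i` and `α j` have a product of order
`M i j`. As in `CoxeterMatrix`, `M i j = 0` stands for an infinite order, and `M i i = 1` makes the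
norm condition the case `i = j` of `eq_neg_cos`. -/
structure IsGeometric {ι : Type*} (B : LinearMap.BilinForm ℝ V) (M : CoxeterMatrix ι)
    (α : ι → V) : Prop where
  isSymm : B.IsSymm
  eq_neg_cos : ∀ i j, M i j ≠ 0 → B (α i) (α j) = -Real.cos (Real.pi / M i j)
  le_neg_one : ∀ i j, M i j = 0 → B (α i) (α j) ≤ -1

lemma exists_isGeometric {ι : Type*} {B : LinearMap.BilinForm ℝ V} (hB : B.IsSymm) {α : ι → V}
    (hα : ∀ i, B (α i) (α i) = 1)
    (hαα : ∀ i j, i ≠ j → B (α i) (α j) ≤ -1 ∨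
      ∃ k : ℕ, 2 ≤ k ∧ B (α i) (α j) = -Real.cos (Real.pi / k)) :
    ∃ M : CoxeterMatrix ι, IsGeometric B M α := by
  classical
  have order_exists : ∀ r : ℝ, ∃ m : ℕ, m ≠ 1 ∧
      (r ≤ -1 ∨ (∃ k : ℕ, 2 ≤ k ∧ r = -Real.cos (Real.pi / k)) →
        (m ≠ 0 → r = -Real.cos (Real.pi / m)) ∧ (m = 0 → r ≤ -1)) := by
    intro r
    by_cases hr : ∃ k : ℕ, 2 ≤ k ∧ r = -Real.cos (Real.pi / k)
    · obtain ⟨k, hk, hrk⟩ := hr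
      exact ⟨k, by lia, fun _ => ⟨fun _ => hrk, by lia⟩⟩
    · exact ⟨0, zero_ne_one, fun h => ⟨by simp, fun _ => h.resolve_right hr⟩⟩
  choose order order_ne_one order_spec using order_exists
  let M : CoxeterMatrix ι :=
    { M := Matrix.of fun i j => if i = j then 1 else order (B (α i) (α j))
      isSymm := by ext i j; simp [eq_comm, hB.eq (α i) (α j)]
      diagonal := by simp
      off_diagonal := fun i j hij => by simpa [hij] using order_ne_one _ }
  have M_of_ne : ∀ i j, i ≠ j → M i j = order (B (α i) (α j)) := fun i j hij => by
    change (if i = j then 1 else order (B (α i) (α j))) = _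
    rw [if_neg hij]
  refine ⟨M, hB, fun i j hij => ?_, fun i j hij => ?_⟩ <;> obtain rfl | hne := eq_or_ne i j
  · simp [hα]
  · rw [M_of_ne i j hne] at hij ⊢
    exact (order_spec _ (hαα i j hne)).1 hij
  · simp at hij
  · exact (order_spec _ (hαα i j hne)).2 (M_of_ne i j hne ▸ hij)

namespace IsGeometric

variable {ι : Type*} {B : LinearMap.BilinForm ℝ V} {M : CoxeterMatrix ι} {α : ι → V}

open CoxeterSystem Polynomial.Chebyshev

lemma apply_self (h : IsGeometric B M α) (i : ι) : B (α i) (α i) = 1 := by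
  simp [h.eq_neg_cos i i]

lemma isLiftable_reflectionEquiv (h : IsGeometric B M α) :
    M.IsLiftable fun i => reflectionEquiv (h.apply_self i) := by
  intro i j
  obtain rfl | hij := eq_or_ne i j
  · simpa using reflectionEquiv_mul_self (h.apply_self i)
  obtain hM | hM := eq_or_ne (M i j) 0
  · rw [hM, pow_zero]
  · exact reflectionEquiv_mul_pow_eq_one h.isSymm _ _ (two_le_coxeterMatrix_of_ne hij hM)
      (h.eq_neg_cos i j hM)

/-- The geometric representation of the Coxeter group, sending each Coxeter generator to the
reflection in the corresponding simple root. -/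
def rep (h : IsGeometric B M α) : M.Group →* (V ≃ₗ[ℝ] V) :=
  M.toCoxeterSystem.lift ⟨_, h.isLiftable_reflectionEquiv⟩

lemma rep_simple (h : IsGeometric B M α) (i : ι) :
    h.rep (M.toCoxeterSystem.simple i) = reflectionEquiv (h.apply_self i) :=
  lift_apply_simple _ h.isLiftable_reflectionEquiv i

lemma bilin_rep_rep (h : IsGeometric B M α) (w : M.Group) (x y : V) :
    B (h.rep w x) (h.rep w y) = B x y := by
  induction w using M.toCoxeterSystem.simple_induction_left with
  | one => simp
  | mul_simple_left w i ih =>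
    rw [map_mul, rep_simple, LinearEquiv.mul_apply, LinearEquiv.mul_apply,
      bilin_reflectionEquiv_reflectionEquiv h.isSymm, ih]

lemma range_rep (h : IsGeometric B M α) :
    h.rep.range = Subgroup.closure (Set.range fun i => reflectionEquiv (h.apply_self i)) := by
  rw [MonoidHom.range_eq_map, ← M.toCoxeterSystem.subgroup_closure_range_simple,
    MonoidHom.map_closure, ← Set.range_comp]
  exact congrArg _ (congrArg _ (funext h.rep_simple))

lemma chebyshev_U_eval_nonneg (h : IsGeometric B M α) {i j : ι} (hij : i ≠ j) {n : ℕ}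
    (hn : M i j ≠ 0 → n ≤ M i j) : 0 ≤ (U ℝ ((n : ℤ) - 1)).eval (-B (α i) (α j)) := by
  obtain hM | hM := eq_or_ne (M i j) 0
  · exact chebyshev_U_eval_nonneg_of_one_le (le_neg_of_le_neg (h.le_neg_one i j hM)) n
  · rw [h.eq_neg_cos i j hM, neg_neg]
    exact chebyshev_U_eval_cos_pi_div_nonneg (two_le_coxeterMatrix_of_ne hij hM) (hn hM)

lemma exists_rep_alternatingWord_apply (h : IsGeometric B M α) {i j : ι} (hij : i ≠ j) {k : ℕ}
    (hk : M i j ≠ 0 → k < M i j) :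
    ∃ a b : ℝ, 0 ≤ a ∧ 0 ≤ b ∧
      h.rep (M.toCoxeterSystem.wordProd (alternatingWord i j k)) (α i) = a • α i + b • α j := by
  have hU : ∀ n ≤ k + 1, 0 ≤ (U ℝ ((n : ℤ) - 1)).eval (-B (α i) (α j)) := fun n hn =>
    h.chebyshev_U_eval_nonneg hij fun hM => hn.trans (hk hM)
  have hrep := congrArg (h.rep · (α i)) (M.toCoxeterSystem.prod_alternatingWord_eq_mul_pow i j k)
  obtain ⟨l, rfl | rfl⟩ := Nat.even_or_odd' k
  · have h₀ := hU (2 * l + 1) le_rfl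
    have h₁ := hU (2 * l) (Nat.le_succ _)
    push_cast at h₀ h₁
    rw [add_sub_cancel_right] at h₀
    refine ⟨_, _, h₀, h₁, hrep.trans ?_⟩
    simpa [-CoxeterMatrix.toCoxeterSystem_simple, rep_simple] using
      reflectionEquiv_pow_apply_left h.isSymm (h.apply_self i) (h.apply_self j) l
  · have h₀ := hU (2 * l + 1) (Nat.le_succ _)
    have h₁ := hU (2 * l + 2) le_rfl
    push_cast at h₀ h₁
    rw [add_sub_cancel_right] at h₀
    rw [show (2 * l + 2 - 1 : ℤ) = 2 * l + 1 by ring] at h₁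
    refine ⟨_, _, h₀, h₁, hrep.trans ?_⟩
    have hdiv : (2 * l + 1) / 2 = l := by lia
    simpa [-CoxeterMatrix.toCoxeterSystem_simple, rep_simple, hdiv] using
      reflectionEquiv_mul_pow_apply_left h.isSymm (h.apply_self i) (h.apply_self j) l

theorem rep_apply_nonneg_of_not_isRightDescent (h : IsGeometric B M α) {f : V →ₗ[ℝ] ℝ}
    (hf : ∀ i, 0 ≤ f (α i)) {w : M.Group} {i : ι}
    (hi : ¬M.toCoxeterSystem.IsRightDescent w i) : 0 ≤ f (h.rep w (α i)) := by
  induction hn : M.toCoxeterSystem.length w using Nat.strong_induction_on generalizing w i with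
  | _ n ih =>
  subst hn
  obtain rfl | hw := eq_or_ne w 1
  · simpa using hf i
  obtain ⟨j, hj⟩ := M.toCoxeterSystem.exists_rightDescent_of_ne_one hw
  have hij : i ≠ j := fun hij => hi (hij ▸ hj)
  obtain ⟨v, k, rfl, hlen, hvi, hvj⟩ := exists_eq_mul_wordProd_alternatingWord _ hj i
  have hreduced := isReduced_alternatingWord_succ_of_not_isRightDescent _ hi hlen
  have hk : M i j ≠ 0 → k + 1 < M i j := fun hM => by
    by_contra! hle
    rw [M.symmetric] at hM hle
    exact M.toCoxeterSystem.not_isReduced_alternatingWord j i hM (by lia) hreduced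
  obtain ⟨a, b, ha, hb, hab⟩ := h.exists_rep_alternatingWord_apply hij hk
  rw [map_mul, LinearEquiv.mul_apply, hab, map_add, map_smul, map_smul, map_add, map_smul,
    map_smul]
  exact add_nonneg (mul_nonneg ha (ih _ (by lia) hvi rfl)) (mul_nonneg hb (ih _ (by lia) hvj rfl))

theorem eq_one_of_forall_rep_apply_pos (h : IsGeometric B M α) {f : V →ₗ[ℝ] ℝ}
    (hf : ∀ i, 0 ≤ f (α i)) {w : M.Group} (hw : ∀ i, 0 < f (h.rep w (α i))) : w = 1 := by
  by_contra hne
  obtain ⟨i, hi⟩ := M.toCoxeterSystem.exists_rightDescent_of_ne_one hne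
  rw [isRightDescent_iff_not_isRightDescent_mul] at hi
  have hnonneg := h.rep_apply_nonneg_of_not_isRightDescent hf hi
  rw [map_mul, rep_simple, LinearEquiv.mul_apply, reflectionEquiv_apply_self,
    map_neg, map_neg] at hnonneg
  linarith [hw i]

end IsGeometric

section Finiteness

lemma finite_of_isBounded_of_separated {X β : Type*} [PseudoMetricSpace X] [ProperSpace X]
    {F : β → X} (hF : Bornology.IsBounded (Set.range F)) {ε : ℝ} (hε : 0 < ε)
    (hsep : ∀ a b, dist (F a) (F b) < ε → a = b) : Finite β := by
  obtain ⟨t, ht, hcover⟩ := Metric.totallyBounded_iff.1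
    (hF.isCompact_closure.totallyBounded.subset subset_closure) (ε / 2) (half_pos hε)
  have nearby : ∀ b, ∃ y ∈ t, dist (F b) y < ε / 2 := fun b => by
    simpa using hcover (Set.mem_range_self b)
  choose center center_mem dist_center using nearby
  have : Finite t := ht
  refine Finite.of_injective (fun b => (⟨center b, center_mem b⟩ : t)) fun a b hab => hsep a b ?_
  rw [← add_halves ε]
  refine (dist_triangle_right _ _ (center a)).trans_lt (add_lt_add (dist_center a) ?_)
  rw [show center a = center b from congrArg Subtype.val hab]
  exact dist_center b

lemma exists_forall_pos_of_zero_notMem_convexHull {E ι : Type*} [NormedAddCommGroup E]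
    [NormedSpace ℝ E] [Finite ι] {α : ι → E} (hα : 0 ∉ convexHull ℝ (Set.range α)) :
    ∃ f : E →L[ℝ] ℝ, ∀ i, 0 < f (α i) := by
  obtain ⟨f, c, hf₀, hf⟩ := geometric_hahn_banach_point_closed (convex_convexHull ℝ (Set.range α))
    ((Set.finite_range α).isClosed_convexHull ℝ) hα
  refine ⟨f, fun i => ?_⟩
  have := hf (α i) (subset_convexHull ℝ _ (Set.mem_range_self i))
  rw [map_zero] at hf₀
  exact hf₀.trans this

lemma exists_forall_dist_lt_imp_pos {E ι : Type*} [PseudoMetricSpace E] [Finite ι]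
    {f : E → ℝ} (hf : Continuous f) {α : ι → E} (hα : ∀ i, 0 < f (α i)) :
    ∃ ε > 0, ∀ x : ι → E, (∀ i, dist (x i) (α i) < ε) → ∀ i, 0 < f (x i) := by
  have := Fintype.ofFinite ι
  have hopen : IsOpen {x : ι → E | ∀ i, 0 < f (x i)} := by
    simp only [Set.ofPred_forall]
    exact isOpen_iInter_of_finite fun i =>
      isOpen_lt continuous_const (hf.comp (continuous_apply i))
  obtain ⟨ε, hε, hball⟩ := Metric.isOpen_iff.1 hopen α hα
  exact ⟨ε, hε, fun x hx => hball (by simpa [dist_pi_lt_iff hε] using hx)⟩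

end Finiteness

namespace IsGeometric

variable {ι : Type*} {M : CoxeterMatrix ι}

lemma norm_rep {E : Type*} [NormedAddCommGroup E] [InnerProductSpace ℝ E] {α : ι → E}
    (h : IsGeometric (innerₗ E) M α) (w : M.Group) (x : E) : ‖h.rep w x‖ = ‖x‖ := by
  have := h.bilin_rep_rep w x x
  rw [innerₗ_apply_apply, innerₗ_apply_apply, real_inner_self_eq_norm_sq,
    real_inner_self_eq_norm_sq] at this
  exact (sq_eq_sq₀ (norm_nonneg _) (norm_nonneg _)).1 this

lemma norm_root {E : Type*} [NormedAddCommGroup E] [InnerProductSpace ℝ E] {α : ι → E}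
    (h : IsGeometric (innerₗ E) M α) (i : ι) : ‖α i‖ = 1 := by
  have := h.apply_self i
  rw [innerₗ_apply_apply, real_inner_self_eq_norm_sq] at this
  exact (pow_eq_one_iff_of_nonneg (norm_nonneg _) two_ne_zero).1 this

/-- An element moving every simple root only slightly keeps all of them positive, so it is trivial;
hence the tuples of unit vectors `(w α i)_i` form a bounded uniformly separated family. -/
theorem finite_group_of_inner {E : Type*} [NormedAddCommGroup E] [InnerProductSpace ℝ E]
    [FiniteDimensional ℝ E] [Finite ι] {α : ι → E} (h : IsGeometric (innerₗ E) M α)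
    (hα : 0 ∉ convexHull ℝ (Set.range α)) : Finite M.Group := by
  have := Fintype.ofFinite ι
  obtain ⟨f, hf⟩ := exists_forall_pos_of_zero_notMem_convexHull hα
  obtain ⟨ε, hε, hpos⟩ := exists_forall_dist_lt_imp_pos f.continuous hf
  have hbounded : Bornology.IsBounded (Set.range fun (w : M.Group) i => h.rep w (α i)) := by
    refine Metric.isBounded_closedBall (x := 0) (r := 1) |>.subset ?_
    rintro _ ⟨w, rfl⟩
    simp [pi_norm_le_iff_of_nonneg, h.norm_rep, h.norm_root]
  refine finite_of_isBounded_of_separated hbounded hε fun v w hvw => ?_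
  rw [dist_pi_lt_iff hε] at hvw
  refine (inv_mul_eq_one.1 ?_).symm
  refine h.eq_one_of_forall_rep_apply_pos (f := f.toLinearMap) (fun i => (hf i).le)
    (hpos _ fun i => ?_)
  calc dist (h.rep (w⁻¹ * v) (α i)) (α i)
      = ‖h.rep w (h.rep (w⁻¹ * v) (α i) - α i)‖ := by rw [h.norm_rep, dist_eq_norm]
    _ = dist (h.rep v (α i)) (h.rep w (α i)) := by
        rw [map_sub, ← LinearEquiv.mul_apply, ← map_mul, mul_inv_cancel_left, dist_eq_norm]
    _ < ε := hvw i

theorem finite_group_of_posDef {U : Type*} [AddCommGroup U] [Module ℝ U] [FiniteDimensional ℝ U]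
    [Finite ι] {B : LinearMap.BilinForm ℝ U} {α : ι → U} (h : IsGeometric B M α)
    (hpos : ∀ x, x ≠ 0 → 0 < B x x) (hα : 0 ∉ convexHull ℝ (Set.range α)) : Finite M.Group := by
  let core : InnerProductSpace.Core ℝ U :=
    { inner := fun x y => B x y
      conj_inner_symm := fun x y => h.isSymm.eq y x
      re_inner_nonneg := fun x => by
        obtain rfl | hx := eq_or_ne x 0
        · simp
        · exact (hpos x hx).le
      add_left := fun x y z => by simp
      smul_left := fun x y r => by simp
      definite := fun x hx => by
        by_contra hne
        exact (hpos x hne).ne' hx }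
  let : NormedAddCommGroup U := core.toNormedAddCommGroup
  let : InnerProductSpace ℝ U := InnerProductSpace.ofCore core.toCore
  exact finite_group_of_inner (E := U) (α := α) h hα

variable {B : LinearMap.BilinForm ℝ V} {α : ι → V}

theorem finite_group [Finite ι] (h : IsGeometric B M α)
    (hpos : ∀ x ∈ Submodule.span ℝ (Set.range α), x ≠ 0 → 0 < B x x)
    (hα : 0 ∉ convexHull ℝ (Set.range α)) : Finite M.Group := by
  let U := Submodule.span ℝ (Set.range α)
  let β : ι → U := fun i => ⟨α i, Submodule.subset_span (Set.mem_range_self i)⟩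
  have : FiniteDimensional ℝ U := FiniteDimensional.span_of_finite ℝ (Set.finite_range α)
  have hβ : IsGeometric (B.restrict U) M β :=
    ⟨h.isSymm.restrict U, h.eq_neg_cos, h.le_neg_one⟩
  refine hβ.finite_group_of_posDef (fun x hx => hpos x x.2 (by simpa using hx)) fun h₀ => hα ?_
  have := Set.mem_image_of_mem U.subtype h₀
  rwa [LinearMap.image_convexHull, ← Set.range_comp, map_zero] at this

end IsGeometric

lemma IsRootBasis.zero_notMem_convexHull {B : LinearMap.BilinForm ℝ V} {Δ : Finset V}
    (hΔ : IsRootBasis B Δ) : (0 : V) ∉ convexHull ℝ (Δ : Set V) := by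
  intro h₀
  obtain ⟨c, hc, hsum, hzero⟩ := Finset.mem_convexHull'.1 h₀
  rw [Finset.sum_eq_zero (hΔ.posIndep c hc hzero)] at hsum
  exact zero_ne_one hsum

lemma reflectionEquiv_mem_weylGroup {B : LinearMap.BilinForm ℝ V} {I : Finset V} {α : V}
    (hα : α ∈ I) (hαα : B α α = 1) : reflectionEquiv hαα ∈ weylGroup B I :=
  Subgroup.subset_closure ⟨α, hα, rfl⟩

theorem IsGeometric.weylGroup_eq_range_rep {B : LinearMap.BilinForm ℝ V} {I : Finset V}
    {M : CoxeterMatrix I} (h : IsGeometric B M (Subtype.val : I → V)) :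
    weylGroup B I = h.rep.range := by
  rw [h.range_rep, weylGroup]
  congr 1
  ext g
  constructor
  · rintro ⟨α, hα, hg⟩
    exact ⟨⟨α, hα⟩, LinearEquiv.toLinearMap_injective hg.symm⟩
  · rintro ⟨α, rfl⟩
    exact ⟨α, α.2, rfl⟩

theorem finite_weylGroup_of_posDef_span {B : LinearMap.BilinForm ℝ V} (hB : B.IsSymm)
    {Δ I : Finset V} (hΔ : IsRootBasis B Δ) (hI : I ⊆ Δ)
    (hpos : ∀ x ∈ Submodule.span ℝ (I : Set V), x ≠ 0 → 0 < B x x) :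
    Finite (weylGroup B I) := by
  obtain ⟨M, hM⟩ : ∃ M : CoxeterMatrix I, IsGeometric B M (Subtype.val : I → V) :=
    exists_isGeometric hB (fun α => hΔ.unit α (hI α.2)) fun α β hne =>
      hΔ.offdiag α (hI α.2) β (hI β.2) (Subtype.coe_injective.ne hne)
  have hrange : Set.range (Subtype.val : I → V) = I := Subtype.range_coe
  have hconv : (0 : V) ∉ convexHull ℝ (I : Set V) := fun h₀ =>
    hΔ.zero_notMem_convexHull (convexHull_mono (Finset.coe_subset.2 hI) h₀)
  have : Finite M.Group := hM.finite_group (by rwa [hrange]) (by rwa [hrange])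
  rw [hM.weylGroup_eq_range_rep]
  exact Finite.of_surjective _ hM.rep.rangeRestrict_surjective

section Lorentz

variable {B : LinearMap.BilinForm ℝ V} {ω : V}

lemma IsLorentz.apply_self_nonneg_of_orthogonal (hB : B.IsSymm) (hLor : IsLorentz B)
    (hω : B ω ω < 0) {x : V} (hx : B x ω = 0) : 0 ≤ B x x := by
  by_contra! hneg
  have hωx : B ω x = 0 := by rw [hB.eq, hx]
  have hlin : LinearIndependent ℝ ![ω, x] := by
    rw [LinearIndependent.pair_iff]
    intro s t hst
    have hω₀ : B (s • ω + t • x) ω = 0 := by simp [hst]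
    have hx₀ : B (s • ω + t • x) x = 0 := by simp [hst]
    simp only [map_add, map_smul, LinearMap.add_apply, LinearMap.smul_apply, smul_eq_mul, hx, hωx,
      mul_zero, add_zero, zero_add, mul_eq_zero] at hω₀ hx₀
    exact ⟨hω₀.resolve_right hω.ne, hx₀.resolve_right hneg.ne⟩
  have hdim := hLor.2.2 (Submodule.span ℝ (Set.range ![ω, x])) fun v hv hv₀ => by
    rw [Matrix.range_cons_cons_empty, Submodule.mem_span_pair] at hv
    obtain ⟨s, t, rfl⟩ := hv
    have hst : B (s • ω + t • x) (s • ω + t • x) = s ^ 2 * B ω ω + t ^ 2 * B x x := by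
      simp only [map_add, map_smul, LinearMap.add_apply, LinearMap.smul_apply, smul_eq_mul, hx, hωx]
      ring
    rw [hst]
    obtain rfl | hs := eq_or_ne s 0
    · have ht : t ≠ 0 := by rintro rfl; simp at hv₀
      nlinarith [sq_pos_of_ne_zero ht]
    · nlinarith [sq_pos_of_ne_zero hs, sq_nonneg t]
  rw [finrank_span_eq_card hlin] at hdim
  simp at hdim

/-- A null vector in the orthogonal complement of `ω`, where `B` is semidefinite, is orthogonal to
that complement and to `ω`, hence to everything. -/
theorem IsLorentz.apply_self_pos_of_orthogonal (hB : B.IsSymm) (hLor : IsLorentz B)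
    (hω : B ω ω < 0) {x : V} (hx : B x ω = 0) (hx₀ : x ≠ 0) : 0 < B x x := by
  refine (hLor.apply_self_nonneg_of_orthogonal hB hω hx).lt_of_ne' fun hnull => hx₀ ?_
  refine hLor.1.1 x fun z => ?_
  have horth : ∀ y, B y ω = 0 → B x y = 0 := by
    intro y hy
    by_contra hxy
    set t := -(B y y + 1) / (2 * B x y) with ht
    have hty : 2 * t * B x y = -(B y y + 1) := by rw [ht]; field_simp
    have hnonneg := hLor.apply_self_nonneg_of_orthogonal hB hω (x := y + t • x) (by simp [hx, hy])
    simp only [map_add, map_smul, LinearMap.add_apply, LinearMap.smul_apply, smul_eq_mul, hnull,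
      hB.eq y x] at hnonneg
    linarith
  have hz := horth (z - (B z ω / B ω ω) • ω) (by simp [hω.ne])
  simpa [hx] using hz

end Lorentz

section Average

variable {B : LinearMap.BilinForm ℝ V}

lemma mem_orthogonal_span_iff {I : Set V} {x : V} :
    x ∈ B.orthogonal (Submodule.span ℝ I) ↔ ∀ α ∈ I, B α x = 0 := by
  rw [LinearMap.BilinForm.mem_orthogonal_iff]
  exact Submodule.span_le (p := LinearMap.ker (B.flip x))

lemma exists_eq_smul_of_orthogonal [FiniteDimensional ℝ V] (hB : B.Nondegenerate) {I : Set V}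
    (hI : Module.finrank ℝ (Submodule.span ℝ I) + 1 = Module.finrank ℝ V) {ω x : V}
    (hω₀ : ω ≠ 0) (hω : ∀ α ∈ I, B α ω = 0) (hx : ∀ α ∈ I, B α x = 0) : ∃ c : ℝ, x = c • ω := by
  have hdim : Module.finrank ℝ (B.orthogonal (Submodule.span ℝ I)) = 1 := by
    rw [LinearMap.BilinForm.finrank_orthogonal hB]
    lia
  obtain ⟨c, hc⟩ := exists_smul_eq_of_finrank_eq_one hdim
    (x := ⟨ω, mem_orthogonal_span_iff.2 hω⟩) (by simpa [Subtype.ext_iff] using hω₀)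
    ⟨x, mem_orthogonal_span_iff.2 hx⟩
  exact ⟨c, (congrArg Subtype.val hc).symm⟩

lemma apply_finsum_subgroup_apply {G : Subgroup (V ≃ₗ[ℝ] V)} [Finite G] {g : V ≃ₗ[ℝ] V}
    (hg : g ∈ G) (x : V) : g (∑ᶠ w : G, (w : V ≃ₗ[ℝ] V) x) = ∑ᶠ w : G, (w : V ≃ₗ[ℝ] V) x := by
  have := Fintype.ofFinite G
  simp only [finsum_eq_sum_of_fintype, map_sum]
  exact Fintype.sum_equiv (Equiv.mulLeft ⟨g, hg⟩) _ _ fun _ => rfl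

lemma bilin_finsum_weylGroup_eq_zero {I : Finset V} [Finite (weylGroup B I)] {α : V} (hα : α ∈ I)
    (hαα : B α α = 1) (x : V) :
    B α (∑ᶠ w : weylGroup B I, (w : V ≃ₗ[ℝ] V) x) = 0 :=
  (reflectionEquiv_apply_eq_self_iff hαα).1
    (apply_finsum_subgroup_apply (reflectionEquiv_mem_weylGroup hα hαα) x)

end Average

theorem timelike_weight_average_general [FiniteDimensional ℝ V] {B : LinearMap.BilinForm ℝ V}
    (hB : B.IsSymm) {Δ I : Finset V} (hΔ : IsRootBasis B Δ) (hLor : IsLorentz B) (hI : I ⊆ Δ)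
    (hdim : Module.finrank ℝ (Submodule.span ℝ (I : Set V)) + 1 = Module.finrank ℝ V)
    {ω : V} (hω : ∀ α ∈ I, B α ω = 0) (hneg : B ω ω < 0) :
    (weylGroup B I : Set (V ≃ₗ[ℝ] V)).Finite ∧
      ∀ x : V, ∃ c : ℝ, ∑ᶠ w : weylGroup B I, (w : V ≃ₗ[ℝ] V) x = c • ω := by
  have hpos : ∀ x ∈ Submodule.span ℝ (I : Set V), x ≠ 0 → 0 < B x x := fun x hx =>
    hLor.apply_self_pos_of_orthogonal hB hneg
      (LinearMap.BilinForm.mem_orthogonal_iff.1 (mem_orthogonal_span_iff.2 hω) x hx)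
  have hfinite : Finite (weylGroup B I) := finite_weylGroup_of_posDef_span hB hΔ hI hpos
  have hω₀ : ω ≠ 0 := by rintro rfl; simp at hneg
  exact ⟨hfinite, fun x => exists_eq_smul_of_orthogonal hLor.1 hdim hω₀ hω fun _ hα =>
    bilin_finsum_weylGroup_eq_zero hα (hΔ.unit _ (hI hα)) x⟩

/-- For a Lorentzian based root system of level `≥ 2` and a
time-like weight `ω_I` (i.e. `B(ω_I,ω_I) < 0`), the facial subgroup `W_I` is
finite, and for every space-like weight `ω ∈ Δ*` the `W_I`-average
`∑_{w ∈ W_I} w(ω)` is a scalar multiple of `ω_I`. -/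
theorem timelike_weight_average
    {V : Type*} [AddCommGroup V] [Module ℝ V] [FiniteDimensional ℝ V]
    (B : LinearMap.BilinForm ℝ V) (hsymm : ∀ x y : V, B x y = B y x)
    (Δ : Finset V) (hΔ : IsRootBasis B Δ) (hLor : IsLorentz B)
    (hlev : ∃ l : ℕ, 2 ≤ l ∧ HasLevel B Δ l)
    (I : Finset V) (ωI : V) (hw : IsWeight B Δ I ωI) (hneg : B ωI ωI < 0) :
    ((weylGroup B I : Set (V ≃ₗ[ℝ] V)).Finite) ∧
      ∀ ω ∈ weights B Δ, 0 < B ω ω →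
        ∃ c : ℝ, (∑ᶠ w : (weylGroup B I : Subgroup (V ≃ₗ[ℝ] V)),
          (w : V ≃ₗ[ℝ] V) ω) = c • ωI := by
  have h := timelike_weight_average_general ⟨hsymm⟩ hΔ hLor hw.1.1 hw.1.2.2 hw.2.1 hneg
  exact ⟨h.1, fun ω _ _ => h.2 ω⟩

end BoydMaxwell
end
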